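/- Let f: ℝ^d → ℝ be differentiable with a global minimizer x*, μ-strongly quasi-convex with μ > 0, and let (g(x))_{x∈ℝ^d} be a stochastic gradient family such that (f, (g(x))) is L-λ(σ²) smooth with L > 0 and λ ≥ 0. For any x ∈ ℝ^d, any integer m ≥ 1, and any α > 0, letting avg_m(x) be the average of m i.i.d. copies of g(x): E‖x − α·avg_m(x) − x*‖² ≤ (1 − μα + λα²/m)·‖x − x*‖² − 2α·(1 − αL/m)·(f(x) − f(x*)) + α²·(1 − 1/m)·‖∇f(x)‖² + α²σ²/m. -/

import Mathlib

open MeasureTheory ProbabilityTheory RealInnerProductSpace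

/-!
Split the squared distance after the step `x ↦ x - α • avg` into squared bias plus variance. Its
bias part is the squared distance after the exact step `x - α • ∇f x`, which strong
quasi-convexity contracts. The variance of an average of `m` pairwise independent copies is
`(E‖g‖² - ‖∇f x‖²) / m`, which smoothness bounds; the subtracted term turns the coefficient `α²`
of `‖∇f x‖²` coming from the bias into `α² (1 - 1 / m)`.
-/

section InnerProductSpace

variable {E : Type*} [NormedAddCommGroup E] [InnerProductSpace ℝ E]

theorem norm_sub_smul_sub_sq_le_of_stronglyQuasiConvex {f : E → ℝ} {x xstar v : E} {μ α : ℝ}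
    (hα : 0 ≤ α) (hqc : f x + ⟪v, xstar - x⟫ + μ / 2 * ‖xstar - x‖ ^ 2 ≤ f xstar) :
    ‖x - α • v - xstar‖ ^ 2 ≤
      (1 - μ * α) * ‖x - xstar‖ ^ 2 - 2 * α * (f x - f xstar) + α ^ 2 * ‖v‖ ^ 2 := by
  have hinner : f x - f xstar + μ / 2 * ‖x - xstar‖ ^ 2 ≤ ⟪x - xstar, v⟫ := by
    rw [← neg_sub x xstar, inner_neg_right, norm_neg, real_inner_comm] at hqc
    linarith
  calc ‖x - α • v - xstar‖ ^ 2
      = ‖x - xstar‖ ^ 2 - 2 * α * ⟪x - xstar, v⟫ + α ^ 2 * ‖v‖ ^ 2 := by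
        rw [sub_right_comm, norm_sub_sq_real, inner_smul_right, norm_smul, mul_pow,
          Real.norm_eq_abs, sq_abs, mul_assoc]
    _ ≤ ‖x - xstar‖ ^ 2 - 2 * α * (f x - f xstar + μ / 2 * ‖x - xstar‖ ^ 2)
          + α ^ 2 * ‖v‖ ^ 2 := by gcongr
    _ = (1 - μ * α) * ‖x - xstar‖ ^ 2 - 2 * α * (f x - f xstar) + α ^ 2 * ‖v‖ ^ 2 := by ring

end InnerProductSpace

section SquareIntegrable

variable {Ω E ι : Type*} [MeasurableSpace Ω] {P : Measure Ω}
  [NormedAddCommGroup E] [InnerProductSpace ℝ E]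

theorem integrable_inner_of_memLp_two {X Y : Ω → E} (hX : MemLp X 2 P) (hY : MemLp Y 2 P) :
    Integrable (fun ω ↦ ⟪X ω, Y ω⟫) P := by
  refine (L2.integrable_inner (𝕜 := ℝ) (hX.toLp X) (hY.toLp Y)).congr ?_
  filter_upwards [hX.coeFn_toLp, hY.coeFn_toLp] with ω hXω hYω
  rw [hXω, hYω]

theorem integral_norm_sum_sq_of_pairwise_orthogonal {X : ι → Ω → E} {s : Finset ι}
    (hX : ∀ i ∈ s, MemLp (X i) 2 P)
    (horth : (s : Set ι).Pairwise fun i j ↦ ∫ ω, ⟪X i ω, X j ω⟫ ∂P = 0) :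
    ∫ ω, ‖∑ i ∈ s, X i ω‖ ^ 2 ∂P = ∑ i ∈ s, ∫ ω, ‖X i ω‖ ^ 2 ∂P := by
  have hint : ∀ i ∈ s, ∀ j ∈ s, Integrable (fun ω ↦ ⟪X i ω, X j ω⟫) P :=
    fun i hi j hj ↦ integrable_inner_of_memLp_two (hX i hi) (hX j hj)
  simp_rw [← real_inner_self_eq_norm_sq, sum_inner, inner_sum]
  rw [integral_finsetSum s fun i hi ↦ integrable_finsetSum s (hint i hi)]
  refine Finset.sum_congr rfl fun i hi ↦ ?_
  rw [integral_finsetSum s (hint i hi)]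
  exact Finset.sum_eq_single_of_mem i hi fun j hj hji ↦ horth hi hj hji.symm

end SquareIntegrable

section TotalVariance

variable {Ω E : Type*} [MeasurableSpace Ω] {P : Measure Ω}
  [NormedAddCommGroup E] [NormedSpace ℝ E]

/-- The total variance `E‖X - E X‖²` of a random vector: in a Hilbert space, the trace of its
covariance operator. It measures the noise of a stochastic gradient and is meaningful for
square-integrable `X`: otherwise a Bochner integral in it may take the junk value `0`. -/
noncomputable def totalVariance (X : Ω → E) (P : Measure Ω) : ℝ :=
  ∫ ω, ‖X ω - ∫ ω', X ω' ∂P‖ ^ 2 ∂P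

theorem totalVariance_const_smul (c : ℝ) (X : Ω → E) :
    totalVariance (fun ω ↦ c • X ω) P = c ^ 2 * totalVariance X P := by
  simp only [totalVariance, integral_smul, ← smul_sub, norm_smul, mul_pow, Real.norm_eq_abs,
    sq_abs, integral_const_mul]

theorem totalVariance_const_sub [IsProbabilityMeasure P] [CompleteSpace E] (c : E) {X : Ω → E}
    (hX : Integrable X P) :
    totalVariance (fun ω ↦ c - X ω) P = totalVariance X P := by
  simp only [totalVariance, integral_sub (integrable_const c) hX, integral_const, probReal_univ,
    one_smul, sub_sub_sub_cancel_left, norm_sub_rev]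

end TotalVariance

section TotalVarianceInnerProductSpace

variable {Ω E ι : Type*} [MeasurableSpace Ω] {P : Measure Ω} [IsProbabilityMeasure P]
  [NormedAddCommGroup E] [InnerProductSpace ℝ E] [CompleteSpace E]

theorem integral_norm_sq_eq_add_totalVariance {X : Ω → E} (hX : MemLp X 2 P) :
    ∫ ω, ‖X ω‖ ^ 2 ∂P = ‖∫ ω, X ω ∂P‖ ^ 2 + totalVariance X P := by
  have hint : Integrable X P := hX.integrable one_le_two
  set v := ∫ ω, X ω ∂P with hv
  have hcross : Integrable (fun ω ↦ 2 * ⟪v, X ω⟫) P := (hint.const_inner v).const_mul 2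
  have htv : totalVariance X P = ∫ ω, (‖X ω‖ ^ 2 - 2 * ⟪v, X ω⟫ + ‖v‖ ^ 2) ∂P := by
    simp only [totalVariance, ← hv, norm_sub_sq_real, real_inner_comm]
  have hsq : Integrable (fun ω ↦ ‖X ω‖ ^ 2) P := hX.integrable_norm_pow two_ne_zero
  have hdiff : Integrable (fun ω ↦ ‖X ω‖ ^ 2 - 2 * ⟪v, X ω⟫) P := hsq.sub hcross
  rw [htv, integral_add hdiff (integrable_const _), integral_sub hsq hcross, integral_const_mul,
    integral_inner hint, ← hv, real_inner_self_eq_norm_sq, integral_const, probReal_univ, one_smul]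
  ring

theorem integral_norm_sub_smul_sq_eq_add_totalVariance (u : E) (α : ℝ) {Y : Ω → E}
    (hY : MemLp Y 2 P) :
    ∫ ω, ‖u - α • Y ω‖ ^ 2 ∂P = ‖u - α • ∫ ω, Y ω ∂P‖ ^ 2 + α ^ 2 * totalVariance Y P := by
  have hint : Integrable (fun ω ↦ α • Y ω) P := (hY.integrable one_le_two).smul α
  have hL2 : MemLp (fun ω ↦ u - α • Y ω) 2 P := (memLp_const u).sub (hY.const_smul α)
  rw [integral_norm_sq_eq_add_totalVariance hL2, totalVariance_const_sub u hint,
    totalVariance_const_smul, integral_sub (integrable_const u) hint, integral_const,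
    probReal_univ, one_smul, integral_smul]

variable [MeasurableSpace E] [BorelSpace E]

theorem integral_inner_sub_integral_eq_zero_of_indepFun {X Y : Ω → E} (hXY : IndepFun X Y P)
    (hX : Integrable X P) (hY : Integrable Y P) :
    ∫ ω, ⟪X ω - ∫ ω', X ω' ∂P, Y ω - ∫ ω', Y ω' ∂P⟫ ∂P = 0 := by
  have hcentered : IndepFun (fun ω ↦ X ω - ∫ ω', X ω' ∂P) (fun ω ↦ Y ω - ∫ ω', Y ω' ∂P) P :=
    hXY.comp (measurable_id.sub_const _) (measurable_id.sub_const _)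
  have hmean : ∫ ω, (X ω - ∫ ω', X ω' ∂P) ∂P = 0 := by
    rw [integral_sub hX (integrable_const _), integral_const, probReal_univ, one_smul, sub_self]
  refine (hcentered.integral_bilin (hX.sub (integrable_const _)) (hY.sub (integrable_const _))
    (innerSL ℝ)).trans ?_
  rw [hmean, map_zero, zero_apply]

theorem totalVariance_sum_of_pairwise_indepFun {X : ι → Ω → E} {s : Finset ι}
    (hX : ∀ i ∈ s, MemLp (X i) 2 P)
    (hindep : (s : Set ι).Pairwise fun i j ↦ IndepFun (X i) (X j) P) :
    totalVariance (fun ω ↦ ∑ i ∈ s, X i ω) P = ∑ i ∈ s, totalVariance (X i) P := by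
  have hint : ∀ i ∈ s, Integrable (X i) P := fun i hi ↦ (hX i hi).integrable one_le_two
  simp only [totalVariance, integral_finsetSum s hint, ← Finset.sum_sub_distrib]
  exact integral_norm_sum_sq_of_pairwise_orthogonal (fun i hi ↦ (hX i hi).sub (memLp_const _))
    fun i hi j hj hij ↦ integral_inner_sub_integral_eq_zero_of_indepFun (hindep hi hj hij)
      (hint i hi) (hint j hj)

theorem totalVariance_average_le_of_pairwise_indepFun {X : ι → Ω → E} {s : Finset ι} {v : E}
    {B : ℝ} (hX : ∀ i ∈ s, MemLp (X i) 2 P)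
    (hindep : (s : Set ι).Pairwise fun i j ↦ IndepFun (X i) (X j) P)
    (hmean : ∀ i ∈ s, ∫ ω, X i ω ∂P = v) (hsq : ∀ i ∈ s, ∫ ω, ‖X i ω‖ ^ 2 ∂P ≤ B) :
    totalVariance (fun ω ↦ (s.card : ℝ)⁻¹ • ∑ i ∈ s, X i ω) P ≤ (B - ‖v‖ ^ 2) / s.card := by
  have hvar : ∀ i ∈ s, totalVariance (X i) P ≤ B - ‖v‖ ^ 2 := fun i hi ↦ by
    have hdecomp := integral_norm_sq_eq_add_totalVariance (hX i hi)
    rw [hmean i hi] at hdecomp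
    linarith [hsq i hi]
  calc totalVariance (fun ω ↦ (s.card : ℝ)⁻¹ • ∑ i ∈ s, X i ω) P
      = (s.card : ℝ)⁻¹ ^ 2 * ∑ i ∈ s, totalVariance (X i) P := by
        rw [totalVariance_const_smul, totalVariance_sum_of_pairwise_indepFun hX hindep]
    _ ≤ (s.card : ℝ)⁻¹ ^ 2 * (s.card * (B - ‖v‖ ^ 2)) := by
        gcongr
        simpa only [nsmul_eq_mul] using Finset.sum_le_card_nsmul s _ _ hvar
    _ = (B - ‖v‖ ^ 2) / s.card := by field

end TotalVarianceInnerProductSpace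

theorem integral_average_eq_of_forall_integral_eq {Ω E ι : Type*} [MeasurableSpace Ω]
    {P : Measure Ω} [NormedAddCommGroup E] [NormedSpace ℝ E] {X : ι → Ω → E} {s : Finset ι}
    {v : E} (hs : s.Nonempty) (hX : ∀ i ∈ s, Integrable (X i) P)
    (hmean : ∀ i ∈ s, ∫ ω, X i ω ∂P = v) :
    ∫ ω, (s.card : ℝ)⁻¹ • ∑ i ∈ s, X i ω ∂P = v := by
  rw [integral_smul, integral_finsetSum s hX, Finset.sum_congr rfl hmean, Finset.sum_const,
    ← Nat.cast_smul_eq_nsmul ℝ, inv_smul_smul₀ (Nat.cast_ne_zero.2 hs.card_ne_zero)]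

theorem stmt9_general {Ω E : Type*} [MeasurableSpace Ω] {P : Measure Ω} [IsProbabilityMeasure P]
    [NormedAddCommGroup E] [InnerProductSpace ℝ E] [CompleteSpace E]
    [MeasurableSpace E] [BorelSpace E] {f : E → ℝ} {x xstar v : E} {μ L lam σ2 α : ℝ}
    {m : ℕ} (hm : 0 < m) {h : Fin m → Ω → E} (hL2 : ∀ i, MemLp (h i) 2 P)
    (hindep : Pairwise fun i j ↦ IndepFun (h i) (h j) P) (hmean : ∀ i, ∫ ω, h i ω ∂P = v)
    (hsqc : f x + ⟪v, xstar - x⟫ + μ / 2 * ‖xstar - x‖ ^ 2 ≤ f xstar)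
    (hsmooth : ∀ i, ∫ ω, ‖h i ω‖ ^ 2 ∂P
        ≤ 2 * L * (f x - f xstar) + lam * ‖x - xstar‖ ^ 2 + σ2)
    (hα : 0 ≤ α) :
    ∫ ω, ‖x - α • ((m : ℝ)⁻¹ • ∑ i, h i ω) - xstar‖ ^ 2 ∂P
      ≤ (1 - μ * α + lam * α ^ 2 / m) * ‖x - xstar‖ ^ 2
        - 2 * α * (1 - α * L / m) * (f x - f xstar)
        + α ^ 2 * (1 - 1 / (m : ℝ)) * ‖v‖ ^ 2
        + α ^ 2 * σ2 / m := by
  set A : Ω → E := fun ω ↦ (m : ℝ)⁻¹ • ∑ i, h i ω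
  set B : ℝ := 2 * L * (f x - f xstar) + lam * ‖x - xstar‖ ^ 2 + σ2 with hB
  have hAL2 : MemLp A 2 P := (memLp_finsetSum _ fun i _ ↦ hL2 i).const_smul _
  have hAmean : ∫ ω, A ω ∂P = v := by
    have : NeZero m := ⟨hm.ne'⟩
    simpa only [Finset.card_univ, Fintype.card_fin] using
      integral_average_eq_of_forall_integral_eq Finset.univ_nonempty
        (fun i _ ↦ (hL2 i).integrable one_le_two) fun i _ ↦ hmean i
  have hAvar : totalVariance A P ≤ (B - ‖v‖ ^ 2) / m := by
    simpa only [Finset.card_univ, Fintype.card_fin] using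
      totalVariance_average_le_of_pairwise_indepFun (s := Finset.univ) (fun i _ ↦ hL2 i)
        (fun i _ j _ hij ↦ hindep hij) (fun i _ ↦ hmean i) fun i _ ↦ hsmooth i
  calc ∫ ω, ‖x - α • A ω - xstar‖ ^ 2 ∂P
      = ‖x - α • v - xstar‖ ^ 2 + α ^ 2 * totalVariance A P := by
        simp only [sub_right_comm x _ xstar]
        rw [integral_norm_sub_smul_sq_eq_add_totalVariance _ _ hAL2, hAmean]
    _ ≤ ((1 - μ * α) * ‖x - xstar‖ ^ 2 - 2 * α * (f x - f xstar) + α ^ 2 * ‖v‖ ^ 2)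
          + α ^ 2 * ((B - ‖v‖ ^ 2) / m) := by
        gcongr
        exact norm_sub_smul_sub_sq_le_of_stronglyQuasiConvex hα hsqc
    _ = _ := by
        rw [hB]
        ring

/-- intermediate per-step recursion in the proof of the paper's
Theorem 2, valid for every step-size `α > 0`.
With `f` differentiable, global minimizer `x*`, `μ`-strongly quasi-convex (`μ > 0`),
`(G x)_x` a stochastic gradient family, `(f, G)` being `L`-`lam(σ²)` smooth with
`L > 0`, `lam ≥ 0`, and `avg_m(x)` the average of `m` i.i.d. copies `h i` of `G x`:
`E‖x − α avg_m(x) − x*‖² ≤ (1 − μα + lam α²/m) ‖x − x*‖²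
  − 2α (1 − αL/m) (f x − f x*) + α² (1 − 1/m) ‖∇f x‖² + α²σ²/m`. -/
theorem stmt9 {Ω : Type*} [MeasurableSpace Ω] (P : Measure Ω) [IsProbabilityMeasure P]
    {d : ℕ} (f : EuclideanSpace ℝ (Fin d) → ℝ) (hf : Differentiable ℝ f)
    (xstar : EuclideanSpace ℝ (Fin d)) (hmin : ∀ x, f xstar ≤ f x)
    (μ L lam σ2 : ℝ) (hμ : 0 < μ) (hL : 0 < L) (hlam : 0 ≤ lam)
    (hsqc : ∀ x, f x + ⟪gradient f x, xstar - x⟫ + μ / 2 * ‖xstar - x‖ ^ 2 ≤ f xstar)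
    (G : EuclideanSpace ℝ (Fin d) → Ω → EuclideanSpace ℝ (Fin d))
    (hGmeas : ∀ x, Measurable (G x))
    (hGL2 : ∀ x, MemLp (G x) 2 P)
    (hGmean : ∀ x, ∫ ω, G x ω ∂P = gradient f x)
    (hsmooth : ∀ x, ∫ ω, ‖G x ω‖ ^ 2 ∂P
        ≤ 2 * L * (f x - f xstar) + lam * ‖x - xstar‖ ^ 2 + σ2)
    (x : EuclideanSpace ℝ (Fin d)) (m : ℕ) (hm : 0 < m)
    (h : Fin m → Ω → EuclideanSpace ℝ (Fin d))
    (hmeas : ∀ i, Measurable (h i))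
    (hiid : iIndepFun h P)
    (hcopy : ∀ i, IdentDistrib (h i) (G x) P P)
    (α : ℝ) (hα0 : 0 < α) :
    ∫ ω, ‖x - α • ((m : ℝ)⁻¹ • ∑ i, h i ω) - xstar‖ ^ 2 ∂P
      ≤ (1 - μ * α + lam * α ^ 2 / m) * ‖x - xstar‖ ^ 2
        - 2 * α * (1 - α * L / m) * (f x - f xstar)
        + α ^ 2 * (1 - 1 / (m : ℝ)) * ‖gradient f x‖ ^ 2
        + α ^ 2 * σ2 / m :=
  stmt9_general hm (fun i ↦ (hcopy i).memLp_iff.2 (hGL2 x)) (fun _ _ hij ↦ hiid.indepFun hij)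
    (fun i ↦ (hcopy i).integral_eq.trans (hGmean x)) (hsqc x)
    (fun i ↦ (hcopy i).norm.sq.integral_eq.trans_le (hsmooth x)) hα0.le
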